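/- There exists a finite graph G (parallel edges allowed) together with a set T ⊆ V(G) of terminals such that T is 3-edge-connected in G and G contains no T-connector. (This is the case k = 1 of the disproof of the conjecture of West and Wu that 3k-edge-connectivity of T in G implies the existence of k pairwise edge-disjoint T-connectors.) -/

import Mathlib

/-!
The counterexample is built from a cubic, 3-edge-connected base graph `Q` on 28 vertices: a hub
and three *fragments*, each a copy of the Petersen graph minus a vertex, arranged as in `K₄`.
Each fragment consists of a hexagon `h₀, …, h₅` and three outlets, the `k`-th outlet being adjacent
to `h_k`, to `h_{k+3}` and to a vertex outside the fragment. Now every vertex of `Q` is replaced by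
a `K_{2,3}`, whose two vertices of degree three are terminals and whose three other vertices are
the half-edges (darts) of `Q` at that vertex.

*Connectivity.* After deleting two edges, the two terminals at a base vertex remain connected via
one of the three darts there (`reach_pair`), and at most two base edges are destroyed, so one of
three edge-disjoint routes from the hub to a given base vertex survives (`reach_hub`).

*No connector.* A terminal path either joins the two terminals of one base vertex through a dart or
follows a single base edge (`tpath_cases`), and no dart lies on two such paths. Let `F` be the set
of base edges followed and `J` the set of base vertices whose two terminals are joined directly. A
connected auxiliary graph on 56 terminals gives `|J| + |F| ≥ 55`. In terms of degrees, this reads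
`∑ (2 [P ∈ J] + deg_F P) ≥ 110`, while each of the 28 summands is at most `4`, and at most `3`
unless `deg_F P = 2`, because `deg_F P = 3` leaves no dart for a direct path at `P`. So at most two
base vertices have `deg_F P ≠ 2`, and some fragment has `F`-degree two throughout
(`exists_fragment`). But the Petersen graph has no Hamiltonian cycle: each of its 2-factors consists
of two five-cycles. Hence `F` either misses the boundary of the fragment, or contains a five-cycle
inside the fragment (`fragment_bool`). In both cases some base vertices are cut off from the hub
(`exists_closed`), a contradiction.
-/

/-
Graphs with terminals are modelled as multigraphs: a vertex type `V`, an edge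
type `E`, and an incidence map `ends : E → Sym2 V` assigning to each edge its
(unordered) pair of endvertices.  Parallel edges are allowed since distinct
edges may have equal endpoint pairs.
-/

namespace TConnectors

variable {V E : Type}

/-- A walk in a multigraph given by an incidence map `ends : E → Sym2 V`. -/
inductive Walk (ends : E → Sym2 V) : V → V → Type where
  | nil (v : V) : Walk ends v v
  | cons {u v w : V} (e : E) (he : ends e = s(u, v)) (p : Walk ends v w) : Walk ends u w

/-- The list of edges of a walk. -/
def Walk.edges {ends : E → Sym2 V} : ∀ {u v : V}, Walk ends u v → List E
  | _, _, .nil _ => []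
  | _, _, .cons e _ p => e :: p.edges

/-- The list of vertices of a walk. -/
def Walk.support {ends : E → Sym2 V} : ∀ {u v : V}, Walk ends u v → List V
  | _, v, .nil _ => [v]
  | u, _, .cons _ _ p => u :: p.support

/-- `T` is `d`-edge-connected in the multigraph: there is no edge-cut of
size smaller than `d` separating two vertices of `T`, i.e. after deleting any
set of fewer than `d` edges, any two terminals are still joined by a walk. -/
def EdgeConnectedIn (ends : E → Sym2 V) (T : Set V) (d : ℕ) : Prop :=
  ∀ S : Finset E, S.card < d → ∀ t₁ ∈ T, ∀ t₂ ∈ T,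
    ∃ p : Walk ends t₁ t₂, ∀ e ∈ p.edges, e ∉ S

/-- A `T`-path: a nontrivial path whose endvertices belong to `T` and whose
internal vertices lie outside `T`. -/
def IsTPath (ends : E → Sym2 V) (T : Set V) {u v : V} (p : Walk ends u v) : Prop :=
  u ∈ T ∧ v ∈ T ∧ p.support.Nodup ∧ p.edges ≠ [] ∧
    ∀ w ∈ p.support.tail.dropLast, w ∉ T

/-- `C` is the edge set of a `T`-connector: a union of a family of pairwise
edge-disjoint `T`-paths such that the auxiliary multigraph on vertex set `T`,
with one edge joining the two endvertices of each `T`-path of the family,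
is connected. -/
def IsConnector (ends : E → Sym2 V) (T : Set V) (C : Set E) : Prop :=
  ∃ (m : ℕ) (a b : Fin m → V) (p : ∀ i, Walk ends (a i) (b i)),
    (∀ i, IsTPath ends T (p i)) ∧
    (∀ i j, i ≠ j → ∀ e ∈ (p i).edges, e ∉ (p j).edges) ∧
    C = { e | ∃ i, e ∈ (p i).edges } ∧
    ∀ t₁ ∈ T, ∀ t₂ ∈ T,
      Relation.ReflTransGen
        (fun x y => ∃ i, (a i = x ∧ b i = y) ∨ (a i = y ∧ b i = x)) t₁ t₂

/-! ### The base graph -/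

/-- Vertices of the base cubic graph: the hub `none`, and in the fragment `i` the three outlets
`some (i, inl k)` and the six hexagon vertices `some (i, inr k)`. -/
abbrev BVert := Option (Fin 3 × (Fin 3 ⊕ Fin 6))

/-- Darts (half-edges) of the base graph: a vertex together with one of its three slots. -/
abbrev Dart := BVert × Fin 3

/-- The other half of the edge containing a given dart. Slot `0` of an outlet leaves its fragment
and its slots `1`, `2` go to the opposite hexagon vertices `k`, `k + 3`. Slot `0` of a hexagon
vertex goes to an outlet, slots `1` and `2` go forwards and backwards along the hexagon. -/
def mate : Dart → Dart
  | (none, j) => (some (j, .inl 0), 0)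
  | (some (i, .inl k), j) =>
    if j = 0 then
      if k = 0 then (none, i)
      else if k = 1 then (some (i + 1, .inl 2), 0) else (some (i + 2, .inl 1), 0)
    else if j = 1 then (some (i, .inr ⟨k.val, by omega⟩), 0)
    else (some (i, .inr ⟨k.val + 3, by omega⟩), 0)
  | (some (i, .inr k), j) =>
    if j = 0 then
      (some (i, .inl ⟨k.val % 3, Nat.mod_lt _ (by omega)⟩), if k.val < 3 then 1 else 2)
    else if j = 1 then (some (i, .inr (k + 1)), 2)
    else (some (i, .inr (k + 5)), 1)

lemma mate_mate : ∀ d, mate (mate d) = d := by decide +kernel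

lemma mate_fst_ne : ∀ d, (mate d).1 ≠ d.1 := by decide +kernel

lemma mate_ne (d : Dart) : mate d ≠ d := fun h => mate_fst_ne d (by rw [h])

/-! ### The graph with terminals -/

/-- Vertices of the counterexample: two terminals for each base vertex, and one nonterminal for
each dart. -/
abbrev GVert := (BVert × Bool) ⊕ Dart

/-- Each dart is adjacent to both terminals at its base vertex, and to its mate. -/
def GAdj : GVert → GVert → Prop
  | .inl x, .inr d => x.1 = d.1
  | .inr d, .inl x => x.1 = d.1
  | .inr d, .inr d' => mate d = d'
  | .inl _, .inl _ => False

lemma GAdj.symm : ∀ {x y : GVert}, GAdj x y → GAdj y x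
  | .inl _, .inr _, h => h
  | .inr _, .inl _, h => h
  | .inr d, .inr d', h => by
    change mate d' = d
    rw [← (show mate d = d' from h), mate_mate]

/-- The counterexample, as a simple graph. -/
def GGraph : SimpleGraph GVert where
  Adj := GAdj
  symm := ⟨fun _ _ h => h.symm⟩
  loopless := ⟨fun x h => by
    rcases x with x | d
    · exact h
    · exact mate_ne d h⟩

/-- The edges of the counterexample. -/
abbrev GEdge := {e : Sym2 GVert // e ∈ GGraph.edgeSet}

/-- The incidence map of the counterexample. -/
def gEnds : GEdge → Sym2 GVert := Subtype.val

/-- The terminals of the counterexample. -/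
def gTerm : Set GVert := Set.range Sum.inl

lemma gEnds_adj {e : GEdge} {x y : GVert} (h : gEnds e = s(x, y)) : GAdj x y := by
  have := e.2
  rw [show e.1 = s(x, y) from h] at this
  exact this

/-! ### Edge-connectivity -/

/-- The step relation in the counterexample after deleting the edges in `S`. -/
def Step (S : Finset (Sym2 GVert)) (x y : GVert) : Prop := GAdj x y ∧ s(x, y) ∉ S

/-- Reachability in the counterexample after deleting the edges in `S`. -/
abbrev Reach (S : Finset (Sym2 GVert)) : GVert → GVert → Prop := Relation.ReflTransGen (Step S)

lemma Step.symm {S : Finset (Sym2 GVert)} {x y : GVert} (h : Step S x y) : Step S y x :=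
  ⟨h.1.symm, by rw [Sym2.eq_swap]; exact h.2⟩

lemma Reach.symm {S : Finset (Sym2 GVert)} {x y : GVert} (h : Reach S x y) : Reach S y x := by
  induction h with
  | refl => exact .refl
  | tail _ h ih => exact (Relation.ReflTransGen.single h.symm).trans ih

set_option synthInstance.maxSize 2000 in
instance : DecidableEq (Sym2 GVert) := inferInstance

lemma Reach.exists_walk {S : Finset GEdge} {x y : GVert} (h : Reach (S.image Subtype.val) x y) :
    ∃ p : Walk gEnds x y, ∀ e ∈ p.edges, e ∉ S := by
  induction h using Relation.ReflTransGen.head_induction_on with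
  | refl => exact ⟨.nil _, by simp [Walk.edges]⟩
  | head h _ ih =>
    obtain ⟨p, hp⟩ := ih
    refine ⟨.cons ⟨_, h.1⟩ rfl p, ?_⟩
    intro e he hS
    rcases List.mem_cons.1 he with rfl | he
    · exact h.2 (Finset.mem_image_of_mem _ hS)
    · exact hp e he hS

lemma exists_not_mem_of_card {α : Type*} {S : Finset α} (hS : S.card < 3) {f : Fin 3 → α}
    (hf : Function.Injective f) : ∃ j, f j ∉ S := by
  by_contra! h
  have := Finset.card_le_card_of_injOn f (s := Finset.univ) (t := S) (fun j _ => h j) hf.injOn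
  simp at this
  omega

lemma reach_pair {S : Finset (Sym2 GVert)} (hS : S.card < 3) (P : BVert) (s t : Bool) :
    Reach S (.inl (P, s)) (.inl (P, t)) := by
  suffices h : Reach S (.inl (P, false)) (.inl (P, true)) by
    cases s <;> cases t
    exacts [.refl, h, h.symm, .refl]
  by_contra hn
  have h1 : ∀ j : Fin 3, ∃ s : Bool, s(Sum.inl (P, s), Sum.inr (P, j)) ∈ S := by
    intro j
    by_contra! h
    exact hn (.head (b := Sum.inr (P, j)) ⟨rfl, h false⟩
      (.single (Step.symm ⟨rfl, h true⟩)))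
  choose s hs using h1
  obtain ⟨j, hj⟩ := exists_not_mem_of_card hS
    (f := fun j => s(Sum.inl (P, s j), Sum.inr (P, j))) (fun i j h => by simp at h; exact h.2)
  exact hj (hs j)

/-- The five edges of the counterexample incident with `d` or with its mate. -/
def Near (d : Dart) (e : Sym2 GVert) : Prop :=
  e = s(.inr d, .inr (mate d)) ∨ (∃ x, e = s(.inl x, .inr d)) ∨ ∃ x, e = s(.inl x, .inr (mate d))

lemma Near.eq {d d' : Dart} {e : Sym2 GVert} (h : Near d e) (h' : Near d' e) :
    d = d' ∨ mate d = d' := by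
  have h1 := mate_mate d
  have h2 := mate_mate d'
  rcases h with rfl | ⟨x, rfl⟩ | ⟨x, rfl⟩ <;> rcases h' with h' | ⟨y, h'⟩ | ⟨y, h'⟩ <;>
    simp at h' <;> grind

/-- Unless a deleted edge lies near the dart `d`, the base edge of `d` can be followed. -/
lemma reach_dart {S : Finset (Sym2 GVert)} {d : Dart}
    (hd : ∀ e, Near d e → e ∉ S) : Reach S (.inl (d.1, false)) (.inl ((mate d).1, false)) := by
  have h1 : Step S (.inl (d.1, false)) (.inr d) := ⟨rfl, hd _ (.inr (.inl ⟨_, rfl⟩))⟩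
  have h2 : Step S (.inr d) (.inr (mate d)) := ⟨rfl, hd _ (.inl rfl)⟩
  have h3 : Step S (.inl ((mate d).1, false)) (.inr (mate d)) :=
    ⟨rfl, hd _ (.inr (.inr ⟨_, rfl⟩))⟩
  exact .head h1 (.head h2 (.single h3.symm))

/-- The darts traversed from `u` by a walk of the base graph, given as a list of slots. -/
def route : BVert → List (Fin 3) → List Dart
  | _, [] => []
  | u, j :: l => (u, j) :: route (mate (u, j)).1 l

/-- The last vertex of the walk from `u` given by a list of slots. -/
def routeEnd : BVert → List (Fin 3) → BVert
  | u, [] => u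
  | u, j :: l => routeEnd (mate (u, j)).1 l

lemma reach_route {S : Finset (Sym2 GVert)} (l : List (Fin 3)) (u : BVert)
    (h : ∀ d ∈ route u l, ∀ e, Near d e → e ∉ S) :
    Reach S (.inl (u, false)) (.inl (routeEnd u l, false)) := by
  induction l generalizing u with
  | nil => exact .refl
  | cons j l ih =>
    exact (reach_dart (h (u, j) (by simp [route]))).trans
      (ih _ fun d hd => h d (by simp [route, hd]))

/-- Three edge-disjoint routes from the hub to each vertex of the fragment `0`, listed in the
order: outlets, hexagon vertices. -/
def routes₀ : Fin 3 ⊕ Fin 6 → Fin 3 → List (Fin 3)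
  | .inl k => ![
      ![[0], [1, 1, 2, 0, 0, 1, 2, 0], [2, 1, 1, 0, 0, 1, 1, 0]],
      ![[0, 1, 1, 0], [1, 1, 2, 0, 0], [2, 1, 1, 0, 0, 2, 2, 0]],
      ![[0, 1, 2, 0], [1, 1, 2, 0, 0, 1, 1, 0], [2, 1, 1, 0, 0]]] k
  | .inr k => ![
      ![[0, 1], [1, 1, 2, 0, 0, 1, 2], [2, 1, 1, 0, 0, 2, 1]],
      ![[0, 1, 1], [1, 1, 2, 0, 0, 1], [2, 1, 1, 0, 0, 1, 2]],
      ![[0, 2, 2], [1, 1, 2, 0, 0, 1, 1], [2, 1, 1, 0, 0, 1]],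
      ![[0, 2], [1, 1, 2, 0, 0, 2, 2], [2, 1, 1, 0, 0, 1, 1]],
      ![[0, 2, 1], [1, 1, 2, 0, 0, 2], [2, 1, 1, 0, 0, 2, 2]],
      ![[0, 1, 2], [1, 1, 2, 0, 0, 2, 1], [2, 1, 1, 0, 0, 2]]] k

/-- Three edge-disjoint routes from the hub to any vertex. Rotating the fragments only affects the
slot used at the hub. -/
def routes : BVert → Fin 3 → List (Fin 3)
  | none, _ => []
  | some (i, x), j => (routes₀ x j).modifyHead (· + i)

lemma routeEnd_routes : ∀ v j, routeEnd none (routes v j) = v := by decide +kernel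

set_option synthInstance.maxHeartbeats 400000 in
set_option synthInstance.maxSize 2000 in
lemma routes_disjoint : ∀ v, ∀ i j, i ≠ j → ∀ d ∈ route none (routes v i),
    ∀ d' ∈ route none (routes v j), d ≠ d' ∧ mate d ≠ d' := by decide +kernel

lemma reach_hub {S : Finset (Sym2 GVert)} (hS : S.card < 3) (v : BVert) :
    Reach S (.inl (none, false)) (.inl (v, false)) := by
  by_contra hn
  have h1 : ∀ j : Fin 3, ∃ e ∈ S, ∃ d ∈ route none (routes v j), Near d e := by
    intro j
    by_contra! h
    have := reach_route (routes v j) none fun d hd e he heS => h e heS d hd he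
    rw [routeEnd_routes] at this
    exact hn this
  choose e heS d hd hde using h1
  obtain ⟨j, hj⟩ := exists_not_mem_of_card hS (f := e) (fun i j h => by
    by_contra hij
    have h1 := routes_disjoint v i j hij _ (hd i) _ (hd j)
    rcases (hde i).eq (h ▸ hde j) with h | h
    exacts [h1.1 h, h1.2 h])
  exact hj (heS j)

lemma edgeConnected : EdgeConnectedIn gEnds gTerm 3 := by
  rintro S hS _ ⟨⟨P, s⟩, rfl⟩ _ ⟨⟨Q, t⟩, rfl⟩
  have hS' : (S.image Subtype.val).card < 3 := Finset.card_image_le.trans_lt hS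
  apply Reach.exists_walk
  exact (reach_pair hS' P s false).trans <| (reach_hub hS' P).symm.trans <|
    (reach_hub hS' Q).trans (reach_pair hS' Q false t)

/-! ### Terminal paths -/

/-- The edges of a walk, as unordered pairs of vertices. -/
def epairs {x y : GVert} (p : Walk gEnds x y) : List (Sym2 GVert) := p.edges.map gEnds

@[simp] lemma epairs_cons {x y z : GVert} (e : GEdge) (he : gEnds e = s(x, y))
    (p : Walk gEnds y z) : epairs (.cons e he p) = s(x, y) :: epairs p := by
  simp [epairs, Walk.edges, he]

lemma Walk.support_ne_nil {x y : GVert} (p : Walk gEnds x y) : p.support ≠ [] := by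
  cases p <;> simp [Walk.support]

lemma Walk.start_mem_support {x y : GVert} (p : Walk gEnds x y) : x ∈ p.support := by
  cases p <;> simp [Walk.support]

/-- A walk that starts at a terminal and has no terminal before its end is trivial. -/
lemma eq_of_no_inner {x : BVert × Bool} {z : GVert} (q : Walk gEnds (.inl x) z)
    (h : ∀ w ∈ q.support.dropLast, w ∉ gTerm) : z = .inl x := by
  cases q with
  | nil => rfl
  | cons e he q =>
    refine absurd ⟨x, rfl⟩ (h (.inl x) ?_)
    rw [Walk.support, List.dropLast_cons_of_ne_nil q.support_ne_nil]
    simp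

/-- A terminal path either joins the two terminals at a base vertex through one dart, or follows
a single base edge. -/
lemma tpath_cases {x y : GVert} (p : Walk gEnds x y) (hp : IsTPath gEnds gTerm p) :
    ∃ (h : Dart) (s t : Bool), x = .inl (h.1, s) ∧ s(.inl (h.1, s), .inr h) ∈ epairs p ∧
      ((y = .inl (h.1, !s) ∧ s(.inl (h.1, !s), .inr h) ∈ epairs p) ∨
        (y = .inl ((mate h).1, t) ∧ s(.inr h, .inr (mate h)) ∈ epairs p ∧
          s(.inl ((mate h).1, t), .inr (mate h)) ∈ epairs p)) := by
  obtain ⟨⟨⟨P, s⟩, rfl⟩, ⟨y, rfl⟩, hnd, hne, hin⟩ := hp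
  cases p with
  | nil => simp [Walk.edges] at hne
  | @cons _ u _ e he q =>
  rcases u with u | h
  · exact (gEnds_adj he).elim
  obtain rfl : P = h.1 := gEnds_adj he
  cases q with
  | @cons _ u _ e₂ he₂ r =>
  simp only [Walk.support, List.tail_cons] at hin hnd
  rw [List.dropLast_cons_of_ne_nil r.support_ne_nil] at hin
  have hin' : ∀ w ∈ r.support.dropLast, w ∉ gTerm := fun w hw => hin w (by simp [hw])
  have hnd' := hnd
  rw [List.nodup_cons, List.nodup_cons] at hnd'
  rcases u with ⟨Q, s'⟩ | d
  · obtain rfl : Q = h.1 := gEnds_adj he₂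
    have hs : s' = !s := by
      have : s ≠ s' := by
        rintro rfl
        exact hnd'.1 (by simp [r.start_mem_support])
      cases s <;> cases s' <;> simp_all
    subst hs
    exact ⟨h, s, s, rfl, by simp, .inl ⟨eq_of_no_inner r hin', by simp⟩⟩
  · obtain rfl : mate h = d := gEnds_adj he₂
    cases r with
    | @cons _ u _ e₃ he₃ r =>
    rcases u with ⟨Q, s'⟩ | d
    · obtain rfl : Q = (mate h).1 := gEnds_adj he₃
      refine ⟨h, s, s', rfl, by simp, .inr ⟨eq_of_no_inner r fun w hw => hin' w ?_, by simp, by simp⟩⟩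
      rw [Walk.support, List.dropLast_cons_of_ne_nil r.support_ne_nil]
      simp [hw]
    · obtain rfl : mate (mate h) = d := gEnds_adj he₃
      refine absurd ?_ hnd'.2.1
      have := r.start_mem_support
      simpa only [Walk.support, mate_mate] using List.mem_cons_of_mem _ this

/-! ### Fragments -/

/-- Exactly two of three Booleans are true. -/
def two (x y z : Bool) : Bool := (x && y && !z) || (x && !y && z) || (!x && y && z)

lemma two_of_card {f : Fin 3 → Prop} [DecidablePred f]
    (h : (Finset.univ.filter f).card = 2) :
    two (decide (f 0)) (decide (f 1)) (decide (f 2)) = true := by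
  rw [Finset.card_filter, Fin.sum_univ_three] at h
  unfold two
  by_cases h0 : f 0 <;> by_cases h1 : f 1 <;> by_cases h2 : f 2 <;> simp_all

set_option synthInstance.maxHeartbeats 400000 in
set_option synthInstance.maxSize 2000 in
/-- An edge set having degree two at the nine vertices of a fragment misses all three boundary edges
`b`, or it contains one of six five-cycles. Here `s` are the edges joining the outlets to the hexagon
and `c` are the hexagon edges. -/
lemma fragment_bool : ∀ b0 s0 s3 : Bool, two b0 s0 s3 → ∀ b1 s1 s4 : Bool, two b1 s1 s4 →
    ∀ b2 s2 s5 : Bool, two b2 s2 s5 → ∀ c0 c5 : Bool, two s0 c0 c5 → ∀ c1 : Bool, two s1 c1 c0 →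
    ∀ c2 : Bool, two s2 c2 c1 → ∀ c3 : Bool, two s3 c3 c2 → ∀ c4 : Bool, two s4 c4 c3 →
    two s5 c5 c4 →
    (!b0 && !b1 && !b2) ∨ (!b0 && !s1 && !s2 && !c3 && !c5) ∨ (!b1 && !s2 && !s3 && !c4 && !c0) ∨
    (!b2 && !s3 && !s4 && !c5 && !c1) ∨ (!b0 && !s4 && !s5 && !c0 && !c2) ∨
    (!b1 && !s5 && !s0 && !c1 && !c3) ∨ (!b2 && !s0 && !s1 && !c2 && !c4) := by
  decide +kernel

/-- The vertex set of the fragment `i`. -/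
def frag (i : Fin 3) : Finset BVert := Finset.univ.image fun x => some (i, x)

/-- The vertex set of the five-cycle through `h_k, h_{k+1}, h_{k+2}, h_{k+3}` and their outlet. -/
def pent (i : Fin 3) (k : Fin 6) : Finset BVert :=
  {some (i, .inl ⟨k.val % 3, Nat.mod_lt _ (by omega)⟩), some (i, .inr k), some (i, .inr (k + 1)),
    some (i, .inr (k + 2)), some (i, .inr (k + 3))}

set_option synthInstance.maxHeartbeats 400000 in
set_option synthInstance.maxSize 2000 in
lemma frag_boundary : ∀ i, ∀ h : Dart, h.1 ∈ frag i → (mate h).1 ∈ frag i ∨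
    h = (some (i, .inl 0), 0) ∨ h = (some (i, .inl 1), 0) ∨ h = (some (i, .inl 2), 0) := by
  decide +kernel

set_option synthInstance.maxHeartbeats 400000 in
set_option synthInstance.maxSize 2000 in
lemma pent_boundary : ∀ i k, ∀ h : Dart, h.1 ∈ pent i k → (mate h).1 ∈ pent i k ∨
    h = (some (i, .inl ⟨k.val % 3, Nat.mod_lt _ (by omega)⟩), 0) ∨ h = (some (i, .inr (k + 1)), 0) ∨
    h = (some (i, .inr (k + 2)), 0) ∨ h = (some (i, .inr (k + 3)), 1) ∨
    h = (some (i, .inr k), 2) := by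
  decide +kernel

/-- If a set `F` of base edges has degree two throughout a fragment, then `F` does not connect
some part of the fragment to the rest of the base graph. -/
lemma exists_closed (F : Dart → Prop) [DecidablePred F] (hF : ∀ h, F h → F (mate h)) (i : Fin 3)
    (hdeg : ∀ x, (Finset.univ.filter fun j => F (some (i, x), j)).card = 2) :
    ∃ S : Finset BVert, S.Nonempty ∧ none ∉ S ∧ ∀ h, h.1 ∈ S → F h → (mate h).1 ∈ S := by
  have hF' : ∀ h, F (mate h) = F h := fun h => propext
    ⟨fun h' => by simpa [mate_mate] using hF _ h', hF h⟩
  have e1 : ∀ k : Fin 3, F (some (i, .inl k), 1) = F (some (i, .inr ⟨k.val, by omega⟩), 0) :=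
    fun k => (hF' _).symm
  have e2 : ∀ k : Fin 3, F (some (i, .inl k), 2) = F (some (i, .inr ⟨k.val + 3, by omega⟩), 0) :=
    fun k => (hF' _).symm
  have e3 : ∀ k : Fin 6, F (some (i, .inr k), 2) = F (some (i, .inr (k + 5)), 1) :=
    fun k => (hF' _).symm
  have hA : ∀ k, _ := fun k : Fin 3 => two_of_card (hdeg (.inl k))
  have hH : ∀ k, _ := fun k : Fin 6 => two_of_card (hdeg (.inr k))
  simp only [e1, e2] at hA
  simp only [e3] at hH
  have key := fragment_bool _ _ _ (hA 0) _ _ _ (hA 1) _ _ _ (hA 2) _ _ (hH 0) _ (hH 1) _ (hH 2) _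
    (hH 3) _ (hH 4) (hH 5)
  have pent_case : ∀ k : Fin 6, ¬ F (some (i, .inl ⟨k.val % 3, Nat.mod_lt _ (by omega)⟩), 0) →
      ¬ F (some (i, .inr (k + 1)), 0) → ¬ F (some (i, .inr (k + 2)), 0) →
      ¬ F (some (i, .inr (k + 3)), 1) → ¬ F (some (i, .inr (k + 5)), 1) →
      ∃ S : Finset BVert, S.Nonempty ∧ none ∉ S ∧ ∀ h, h.1 ∈ S → F h → (mate h).1 ∈ S := by
    intro k h1 h2 h3 h4 h5
    refine ⟨pent i k, ⟨some (i, .inr k), by simp [pent]⟩, by simp [pent], fun h hh hFh => ?_⟩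
    rw [← e3] at h5
    rcases pent_boundary i k h hh with h' | rfl | rfl | rfl | rfl | rfl
    · exact h'
    all_goals contradiction
  simp only [Bool.and_eq_true, Bool.not_eq_true', decide_eq_false_iff_not] at key
  rcases key with ⟨⟨h1, h2⟩, h3⟩ | key | key | key | key | key | key
  · refine ⟨frag i, ⟨some (i, .inl 0), by simp [frag]⟩, by simp [frag], fun h hh hFh => ?_⟩
    rcases frag_boundary i h hh with h' | rfl | rfl | rfl
    · exact h'
    all_goals contradiction
  · obtain ⟨⟨⟨⟨h1, h2⟩, h3⟩, h4⟩, h5⟩ := key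
    exact pent_case 0 h1 h2 h3 h4 h5
  · obtain ⟨⟨⟨⟨h1, h2⟩, h3⟩, h4⟩, h5⟩ := key
    exact pent_case 1 h1 h2 h3 h4 h5
  · obtain ⟨⟨⟨⟨h1, h2⟩, h3⟩, h4⟩, h5⟩ := key
    exact pent_case 2 h1 h2 h3 h4 h5
  · obtain ⟨⟨⟨⟨h1, h2⟩, h3⟩, h4⟩, h5⟩ := key
    exact pent_case 3 h1 h2 h3 h4 h5
  · obtain ⟨⟨⟨⟨h1, h2⟩, h3⟩, h4⟩, h5⟩ := key
    exact pent_case 4 h1 h2 h3 h4 h5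
  · obtain ⟨⟨⟨⟨h1, h2⟩, h3⟩, h4⟩, h5⟩ := key
    exact pent_case 5 h1 h2 h3 h4 h5

/-! ### Counting -/

/-- Degree count in the base graph: `J P` says that the two terminals at `P` are joined
directly, `F` is the set of base edges that are followed. If together they supply enough edges for
a spanning tree on the `56` terminals, then `F` has degree two throughout some fragment. -/
lemma exists_fragment (F : Dart → Prop) (J : BVert → Prop) [DecidablePred F] [DecidablePred J]
    (hJF : ∀ P, J P → ∃ j, ¬ F (P, j))
    (hcard : 110 ≤ 2 * (Finset.univ.filter J).card + (Finset.univ.filter F).card) :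
    ∃ i, ∀ x, (Finset.univ.filter fun j => F (some (i, x), j)).card = 2 := by
  by_contra! hcon
  choose x hx using hcon
  set deg : BVert → ℕ := fun P => (Finset.univ.filter fun j => F (P, j)).card with hdeg
  have hFs : (Finset.univ.filter F).card = ∑ P, deg P := by
    simp only [hdeg, Finset.card_filter]
    rw [Fintype.sum_prod_type]
  have hJs : (Finset.univ.filter J).card = ∑ P, if J P then 1 else 0 := Finset.card_filter _ _
  have hle3 : ∀ P, deg P ≤ 3 := fun P => (Finset.card_filter_le _ _).trans (by simp)
  have hJ3 : ∀ P, J P → deg P ≤ 2 := by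
    intro P hP
    obtain ⟨j, hj⟩ := hJF P hP
    have : deg P < (Finset.univ : Finset (Fin 3)).card :=
      Finset.card_lt_card (Finset.filter_ssubset.2 ⟨j, Finset.mem_univ _, hj⟩)
    simp at this
    omega
  set B : Finset BVert := Finset.univ.image fun i => some (i, x i) with hB
  have hBc : B.card = 3 := by
    rw [hB, Finset.card_image_of_injective _ (fun i j h => by simp at h; exact h.1)]
    rfl
  -- The contribution `2 * [J P] + deg P` is at most `4`, and at most `3` if `deg P ≠ 2`.
  have hpt : ∀ P, (2 * (if J P then 1 else 0) + deg P) + (if P ∈ B then 1 else 0) ≤ 4 := by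
    intro P
    have h3 := hle3 P
    have hBP : P ∈ B → deg P ≠ 2 := by
      intro hP
      obtain ⟨i, -, rfl⟩ := Finset.mem_image.1 hP
      exact hx i
    by_cases hP : J P
    · have := hJ3 P hP
      by_cases hb : P ∈ B
      · have := hBP hb
        simp [hP, hb]; omega
      · simp [hP, hb]; omega
    · by_cases hb : P ∈ B <;> simp [hP, hb] <;> omega
  have hsum := Finset.sum_le_sum fun P (_ : P ∈ Finset.univ) => hpt P
  rw [Finset.sum_add_distrib, Finset.sum_add_distrib, ← Finset.mul_sum, ← hJs, ← hFs,
    ← Finset.card_filter] at hsum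
  simp [hBc] at hsum
  omega

/-- The connectivity relation of the auxiliary multigraph cannot be total, given terminal paths from
`a i` to `b i` that are either inside a base vertex (`I i h`, through the dart `h`) or cross a base
edge (`C i h`, along the dart `h`), with each dart used at most once. -/
lemma no_connection {m : ℕ} (a b : Fin m → BVert × Bool) (I C : Fin m → Dart → Prop)
    (hcases : ∀ i, (∃ h, I i h) ∨ ∃ h, C i h)
    (hI : ∀ i h, I i h → (a i).1 = h.1 ∧ (b i).1 = h.1)
    (hCm : ∀ i h, C i h → C i (mate h))
    (hC : ∀ i h, C i h → ((a i).1 = h.1 ∧ (b i).1 = (mate h).1) ∨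
      ((a i).1 = (mate h).1 ∧ (b i).1 = h.1))
    (hdisj : ∀ i j h, (I i h ∨ C i h) → (I j h ∨ C j h) → i = j)
    (hconn : ∀ x y, Relation.ReflTransGen
      (fun x y => ∃ i, (a i = x ∧ b i = y) ∨ (a i = y ∧ b i = x)) x y) : False := by
  classical
  set F : Dart → Prop := fun h => ∃ i, C i h with hFdef
  set J : BVert → Prop := fun P => ∃ i h, I i h ∧ h.1 = P with hJdef
  have hFm : ∀ h, F h → F (mate h) := fun h ⟨i, hi⟩ => ⟨i, hCm i h hi⟩
  have hIC : ∀ i h, I i h → ¬ F h := by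
    rintro i h hi ⟨j, hj⟩
    obtain rfl := hdisj i j h (.inl hi) (.inr hj)
    have h1 := hI i h hi
    have h2 := mate_fst_ne h
    rcases hC i h hj with h3 | h3
    · exact h2 (h3.2.symm.trans h1.2)
    · exact h2 (h3.1.symm.trans h1.1)
  let H : SimpleGraph (BVert × Bool) :=
    { Adj := fun x y => x ≠ y ∧ ∃ i, (a i = x ∧ b i = y) ∨ (a i = y ∧ b i = x)
      symm := ⟨fun x y ⟨h, i, hi⟩ => ⟨h.symm, i, hi.symm⟩⟩
      loopless := ⟨fun x h => h.1 rfl⟩ }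
  have hHconn : H.Connected := by
    refine ⟨fun x y => ?_⟩
    induction hconn x y with
    | refl => exact .refl _
    | @tail y z _ h ih =>
      by_cases hyz : y = z
      · exact hyz ▸ ih
      · exact ih.trans (SimpleGraph.Adj.reachable ⟨hyz, h⟩)
  let φ : Dart → Sym2 (BVert × Bool) := fun h =>
    if hh : F h then s(a hh.choose, b hh.choose) else s((h.1, true), (h.1, true))
  have hφ : ∀ i h, C i h → φ h = s(a i, b i) := by
    intro i h hi
    have hF : F h := ⟨i, hi⟩
    have := hdisj _ i h (.inr hF.choose_spec) (.inr hi)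
    simp only [φ, dif_pos hF, this]
  have hsub : H.edgeFinset ⊆ (Finset.univ.filter J).image (fun P => s((P, false), (P, true))) ∪
      (Finset.univ.filter F).image φ := by
    intro e he
    rw [SimpleGraph.mem_edgeFinset] at he
    have hab : ∃ i, e = s(a i, b i) ∧ a i ≠ b i := by
      induction e with
      | h x y =>
        obtain ⟨hxy, i, ⟨rfl, rfl⟩ | ⟨rfl, rfl⟩⟩ := he
        · exact ⟨i, rfl, hxy⟩
        · exact ⟨i, Sym2.eq_swap, hxy.symm⟩
    obtain ⟨i, rfl, hne⟩ := hab
    rw [Finset.mem_union, Finset.mem_image, Finset.mem_image]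
    rcases hcases i with ⟨h, hi⟩ | ⟨h, hi⟩
    · refine .inl ⟨h.1, by simpa using ⟨i, h, hi, rfl⟩, ?_⟩
      obtain ⟨h1, h2⟩ := hI i h hi
      rcases ha : a i with ⟨P, s⟩
      rcases hb : b i with ⟨Q, t⟩
      rw [ha] at h1 hne
      rw [hb] at h2 hne
      simp only at h1 h2
      subst h1 h2
      cases s <;> cases t <;> simp_all
    · exact .inr ⟨h, by simpa using ⟨i, hi⟩, hφ i h hi⟩
  have hhalf : 2 * ((Finset.univ.filter F).image φ).card ≤ (Finset.univ.filter F).card := by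
    apply Finset.mul_card_image_le_card
    intro e he
    obtain ⟨h, hF, rfl⟩ := Finset.mem_image.1 he
    obtain ⟨i, hi⟩ := (Finset.mem_filter.1 hF).2
    rw [← Finset.card_pair (mate_ne h)]
    apply Finset.card_le_card
    intro d hd
    rcases Finset.mem_insert.1 hd with rfl | hd
    · simpa [hφ i _ hi, hφ i _ (hCm i _ hi)] using ⟨i, hCm i _ hi⟩
    · obtain rfl := Finset.mem_singleton.1 hd
      simpa using ⟨i, hi⟩
  have hcard := hHconn.card_vert_le_card_edgeSet_add_one
  have h56 : Nat.card (BVert × Bool) = 56 := by simp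
  rw [h56, Nat.card_eq_fintype_card, ← SimpleGraph.edgeFinset_card] at hcard
  have h1 := (Finset.card_le_card hsub).trans (Finset.card_union_le _ _)
  have h2 : ((Finset.univ.filter J).image (fun P => s((P, false), (P, true)))).card ≤
    (Finset.univ.filter J).card := Finset.card_image_le
  obtain ⟨i, hi⟩ := exists_fragment F J
    (by rintro P ⟨i, h, hi, rfl⟩; exact ⟨h.2, hIC i h hi⟩) (by omega)
  obtain ⟨S, ⟨P, hP⟩, hnone, hS⟩ := exists_closed F hFm i hi
  have hstay : ∀ i h, C i h → (h.1 ∈ S ↔ (mate h).1 ∈ S) := fun i h hi =>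
    ⟨fun hh => hS h hh ⟨i, hi⟩,
      fun hh => by simpa [mate_mate] using hS _ hh ⟨i, hCm i h hi⟩⟩
  have hab : ∀ i, (a i).1 ∈ S ↔ (b i).1 ∈ S := by
    intro i
    rcases hcases i with ⟨h, hi⟩ | ⟨h, hi⟩
    · rw [(hI i h hi).1, (hI i h hi).2]
    · have := hstay i h hi
      rcases hC i h hi with ⟨h1, h2⟩ | ⟨h1, h2⟩ <;> rw [h1, h2]
      · exact this
      · exact this.symm
  have hinv : ∀ y, Relation.ReflTransGen
      (fun x y => ∃ i, (a i = x ∧ b i = y) ∨ (a i = y ∧ b i = x)) (P, true) y → y.1 ∈ S := by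
    intro y hy
    induction hy with
    | refl => exact hP
    | tail _ h ih =>
      obtain ⟨i, ⟨rfl, rfl⟩ | ⟨rfl, rfl⟩⟩ := h
      · exact (hab i).1 ih
      · exact (hab i).2 ih
  exact hnone (hinv (none, true) (hconn _ _))

lemma no_connector : ¬ ∃ C : Set GEdge, IsConnector gEnds gTerm C := by
  rintro ⟨_, m, a, b, p, hp, hdis, -, hconn⟩
  choose a' ha using fun i => (hp i).1
  choose b' hb using fun i => (hp i).2.1
  have hdis' : ∀ i j e, e ∈ epairs (p i) → e ∈ epairs (p j) → i = j := by
    intro i j e hi hj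
    by_contra hij
    obtain ⟨e₁, h1, rfl⟩ := List.mem_map.1 hi
    obtain ⟨e₂, h2, h⟩ := List.mem_map.1 hj
    obtain rfl : e₂ = e₁ := Subtype.ext h
    exact hdis i j hij _ h1 h2
  let I : Fin m → Dart → Prop := fun i h => (a' i).1 = h.1 ∧ (b' i).1 = h.1 ∧
    ∀ s, s(.inl (h.1, s), .inr h) ∈ epairs (p i)
  let C : Fin m → Dart → Prop := fun i h =>
    (((a' i).1 = h.1 ∧ (b' i).1 = (mate h).1) ∨ ((a' i).1 = (mate h).1 ∧ (b' i).1 = h.1)) ∧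
    s(.inr h, .inr (mate h)) ∈ epairs (p i) ∧
    (∃ s, s(.inl (h.1, s), .inr h) ∈ epairs (p i)) ∧
    ∃ s, s(.inl ((mate h).1, s), .inr (mate h)) ∈ epairs (p i)
  refine no_connection a' b' I C ?_ (fun i h hi => ⟨hi.1, hi.2.1⟩) ?_ (fun i h hi => hi.1) ?_ ?_
  · intro i
    obtain ⟨h, s, t, hx, h1, ⟨hy, h2⟩ | ⟨hy, h2, h3⟩⟩ := tpath_cases (p i) (hp i)
    · rw [← ha] at hx
      rw [← hb] at hy
      refine .inl ⟨h, ?_, ?_, fun r => ?_⟩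
      · rw [Sum.inl.inj hx]
      · rw [Sum.inl.inj hy]
      · cases s <;> cases r <;> assumption
    · rw [← ha] at hx
      rw [← hb] at hy
      exact .inr ⟨h, .inl ⟨by rw [Sum.inl.inj hx], by rw [Sum.inl.inj hy]⟩, h2, ⟨s, h1⟩, ⟨t, h3⟩⟩
  · rintro i h ⟨h1, h2, h3, h4⟩
    refine ⟨?_, ?_, h4, ?_⟩
    · rw [mate_mate]; exact h1.symm
    · rw [mate_mate, Sym2.eq_swap]; exact h2
    · rw [mate_mate]; exact h3
  · rintro i j h (hi | hi) (hj | hj)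
    · exact hdis' i j _ (hi.2.2 true) (hj.2.2 true)
    · obtain ⟨s, hs⟩ := hj.2.2.1
      exact hdis' i j _ (hi.2.2 s) hs
    · obtain ⟨s, hs⟩ := hi.2.2.1
      exact hdis' i j _ hs (hj.2.2 s)
    · exact hdis' i j _ hi.2.1 hj.2.1
  · intro x y
    have hinv : ∀ z, Relation.ReflTransGen
        (fun x y => ∃ i, (a i = x ∧ b i = y) ∨ (a i = y ∧ b i = x)) (.inl x) z →
        ∃ z', z = .inl z' ∧ Relation.ReflTransGen
          (fun x y => ∃ i, (a' i = x ∧ b' i = y) ∨ (a' i = y ∧ b' i = x)) x z' := by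
      intro z hz
      induction hz with
      | refl => exact ⟨x, rfl, .refl⟩
      | tail _ h ih =>
        obtain ⟨z', rfl, hz'⟩ := ih
        obtain ⟨i, ⟨h1, h2⟩ | ⟨h1, h2⟩⟩ := h
        · rw [← ha] at h1
          exact ⟨b' i, by rw [← h2, hb], hz'.tail ⟨i, .inl ⟨Sum.inl.inj h1, rfl⟩⟩⟩
        · rw [← hb] at h2
          exact ⟨a' i, by rw [← h1, ha], hz'.tail ⟨i, .inr ⟨rfl, Sum.inl.inj h2⟩⟩⟩
    obtain ⟨z', hz, h⟩ := hinv (.inl y) (hconn _ ⟨x, rfl⟩ _ ⟨y, rfl⟩)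
    rwa [← Sum.inl.inj hz] at h

/-- There is a finite graph with terminals `(G, T)` such that
`T` is `3`-edge-connected in `G` but `G` contains no `T`-connector
(the case `k = 1` of the disproof of the West–Wu conjecture). -/
theorem counterexample_k_one :
    ∃ (V E : Type) (_ : Fintype V) (_ : Fintype E) (ends : E → Sym2 V) (T : Set V),
      EdgeConnectedIn ends T 3 ∧
      ¬ ∃ C : Set E, IsConnector ends T C := by
  exact ⟨GVert, GEdge, inferInstance, Fintype.ofFinite _, gEnds, gTerm, edgeConnected, no_connector⟩

end TConnectors
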